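/- The equation Y² = 3³·5·X⁵ − 5 (that is, Y² = 135X⁵ − 5) has no rational solutions (X, Y) ∈ ℚ × ℚ. -/

import Mathlib

theorem c8_thue (N : ℕ) (hN : 0 < N) (t : ℤ) :
    ∃ u v : ℤ, (u ≠ 0 ∨ v ≠ 0) ∧ u ^ 2 < 2 * N ∧ 2 * v ^ 2 ≤ N ∧ (N : ℤ) ∣ u - t * v := by
  set B := Nat.sqrt (N / 2) with hB
  set A := N / (B + 1) with hA
  have h1 : 2 * (B * B) ≤ N := by
    have : B * B ≤ N / 2 := Nat.sqrt_le (N / 2)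
    omega
  have h2 : N < 2 * ((B + 1) * (B + 1)) := by
    have : N / 2 < (B + 1) * (B + 1) := Nat.lt_succ_sqrt (N / 2)
    omega
  have h3 : A * (B + 1) ≤ N := Nat.div_mul_le_self _ _
  have h4 : N < (A + 1) * (B + 1) := by
    have := Nat.lt_mul_div_succ N (Nat.succ_pos B)
    calc N < (B + 1) * (A + 1) := this
      _ = _ := by ring
  have hA2 : A * A < 2 * N := by
    by_contra hcon
    push Not at hcon
    have : (A * (B + 1)) * (A * (B + 1)) ≤ N * N := Nat.mul_le_mul h3 h3
    nlinarith [Nat.mul_le_mul hcon (le_refl ((B + 1) * (B + 1)))]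
  have : NeZero N := ⟨hN.ne'⟩
  let f : Fin (A + 1) × Fin (B + 1) → ZMod N := fun p => ((p.1 : ℕ) : ZMod N) - (t : ZMod N) * ((p.2 : ℕ) : ZMod N)
  have hcard : Fintype.card (ZMod N) < Fintype.card (Fin (A + 1) × Fin (B + 1)) := by
    simp [ZMod.card]; exact h4
  obtain ⟨p, q, hpq, hf⟩ := Fintype.exists_ne_map_eq_of_card_lt f hcard
  refine ⟨(p.1 : ℕ) - (q.1 : ℕ), (p.2 : ℕ) - (q.2 : ℕ), ?_, ?_, ?_, ?_⟩
  · by_contra hcon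
    push Not at hcon
    apply hpq
    ext <;> omega
  · have e1 := p.1.2
    have e2 := q.1.2
    have : |((p.1 : ℕ) : ℤ) - (q.1 : ℕ)| ≤ A := by rw [abs_le]; constructor <;> omega
    have h5 : (((p.1 : ℕ) : ℤ) - (q.1 : ℕ)) ^ 2 ≤ (A : ℤ) ^ 2 := sq_le_sq' (by rw [abs_le] at this; linarith) (by rw [abs_le] at this; linarith)
    have : ((A * A : ℕ) : ℤ) < ((2 * N : ℕ) : ℤ) := by exact_mod_cast hA2
    push_cast at this
    nlinarith
  · have e1 := p.2.2
    have e2 := q.2.2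
    have : |((p.2 : ℕ) : ℤ) - (q.2 : ℕ)| ≤ B := by rw [abs_le]; constructor <;> omega
    have h5 : (((p.2 : ℕ) : ℤ) - (q.2 : ℕ)) ^ 2 ≤ (B : ℤ) ^ 2 := sq_le_sq' (by rw [abs_le] at this; linarith) (by rw [abs_le] at this; linarith)
    have : ((2 * (B * B) : ℕ) : ℤ) ≤ ((N : ℕ) : ℤ) := by exact_mod_cast h1
    push_cast at this
    nlinarith
  · rw [← ZMod.intCast_zmod_eq_zero_iff_dvd]
    simp only [f] at hf
    push_cast
    linear_combination hf

theorem c8_norm_pow (D : ℤ) (a : ℤ√D) (n : ℕ) : (a ^ n).norm = a.norm ^ n := by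
  induction n with
  | zero => simp
  | succ k ih => rw [pow_succ, Zsqrtd.norm_mul, ih, pow_succ]

theorem c8_cancel {D : ℤ} (n : ℤ) (hn : n ≠ 0) {a b : ℤ√D}
    (h : (n : ℤ√D) * a = (n : ℤ√D) * b) : a = b := by
  have h1 := congrArg Zsqrtd.re h
  have h2 := congrArg Zsqrtd.im h
  simp [hn] at h1 h2
  exact Zsqrtd.ext h1 h2

theorem c8_canc {a b : ℤ} (h : 1024 * a = 1024 * b) : a = b := by omega

/-- Elements of small norm in the lattice attached to `α`, and the resulting divisibility. -/
theorem c8_lattice (D : ℤ) (α : ℤ√D) (N : ℕ) (hN : 0 < N)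
    (M : ℤ) (hM : M = N ∨ M = -N) (hn : α.norm = M ^ 5) (hcop : IsCoprime α.im (N : ℤ)) :
    ∃ β η : ℤ√D, (β.re ≠ 0 ∨ β.im ≠ 0) ∧ β.re ^ 2 < 2 * N ∧ 2 * β.im ^ 2 ≤ N ∧
      (N : ℤ) ∣ β.norm ∧ α * star β ^ 5 = (M : ℤ√D) ^ 5 * η := by
  obtain ⟨y', k, hy⟩ := hcop
  obtain ⟨u, v, h0, hu, hv, l, hl⟩ := c8_thue N hN (α.re * y')
  obtain ⟨M', hM'⟩ : M ∣ (N : ℤ) := by rcases hM with h | h <;> simp [h]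
  obtain ⟨M2, hM2⟩ : (N : ℤ) ∣ M := by rcases hM with h | h <;> simp [h]
  have hβ : ∃ (z : ℤ) (δ : ℤ√D), (⟨u, v⟩ : ℤ√D) = (z : ℤ√D) * α + (M : ℤ√D) * δ := by
    refine ⟨v * y', ⟨M' * l, M' * k * v⟩, ?_⟩
    ext
    · simp
      linear_combination hl + l * hM'
    · simp
      linear_combination (-v) * hy + (k * v) * hM'
  obtain ⟨z, δ, hβ⟩ := hβ
  have hna : α * star α = (M : ℤ√D) ^ 5 := by
    rw [← Zsqrtd.norm_eq_mul_conj, hn]; push_cast; rfl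
  refine ⟨⟨u, v⟩, z * (z ^ 4 * star α ^ 4 + 5 * z ^ 3 * star α ^ 3 * (M * star δ) + 10 * z ^ 2 * star α ^ 2 * (M * star δ) ^ 2 + 10 * z * star α * (M * star δ) ^ 3 + 5 * (M * star δ) ^ 4) + α * star δ ^ 5, h0, hu, hv, ?_, ?_⟩
  · have : (N : ℤ) ∣ M ^ 5 := (Dvd.intro _ hM2.symm).trans (dvd_pow_self _ (by norm_num))
    have h2 : (⟨u, v⟩ : ℤ√D).norm = z ^ 2 * α.norm + M * (2 * z * (α.re * δ.re - D * α.im * δ.im) + M * δ.norm) := by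
      rw [hβ]
      simp [Zsqrtd.norm_def]
      ring
    rw [h2, hn]
    exact dvd_add (this.mul_left _) ((Dvd.intro _ hM2.symm).mul_right _)
  · rw [hβ]
    simp only [star_add, star_mul, star_intCast]
    linear_combination ((z : ℤ√D) * (z ^ 4 * star α ^ 4 + 5 * z ^ 3 * star α ^ 3 * (M * star δ) + 10 * z ^ 2 * star α ^ 2 * (M * star δ) ^ 2 + 10 * z * star α * (M * star δ) ^ 3 + 5 * (M * star δ) ^ 4)) * hna

theorem c8_smallnorm (x y : ℤ) (n : ℤ) (hn : n ≤ 1024) (h : x ^ 2 + 5 * y ^ 2 = n) :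
    x ∈ Finset.Icc (-32 : ℤ) 32 ∧ y ∈ Finset.Icc (-14 : ℤ) 14 := by
  rw [Finset.mem_Icc, Finset.mem_Icc]
  refine ⟨⟨?_, ?_⟩, ⟨?_, ?_⟩⟩ <;> nlinarith [sq_nonneg x, sq_nonneg y]

theorem c8_dec32 : ∀ x ∈ Finset.Icc (-32 : ℤ) 32, ∀ y ∈ Finset.Icc (-14 : ℤ) 14,
    x ^ 2 + 5 * y ^ 2 ≠ 32 ∧ x ^ 2 + 5 * y ^ 2 ≠ 243 ∧ 
    (x ^ 2 + 5 * y ^ 2 = 1024 → y = 0 ∧ (x = 32 ∨ x = -32)) ∧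
    (x ^ 2 + 5 * y ^ 2 = 1 → y = 0 ∧ (x = 1 ∨ x = -1)) := by
  decide +kernel

theorem c8_fifth_im (x y N : ℤ) (hc : IsCoprime x y) (h : x ^ 2 + 5 * y ^ 2 = N ^ 5) :
    ∃ u v : ℤ, x = u ^ 5 - 50 * u ^ 3 * v ^ 2 + 125 * u * v ^ 4 ∧
      y = 5 * u ^ 4 * v - 50 * u ^ 2 * v ^ 3 + 25 * v ^ 5 := by
  have hpos : 0 < x ^ 2 + 5 * y ^ 2 := by
    rcases eq_or_ne x 0 with rfl | hx
    · rcases eq_or_ne y 0 with rfl | hy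
      · exact absurd hc not_isCoprime_zero_zero
      · positivity
    · positivity
  have hN : 0 < N := by
    rw [h] at hpos
    exact (Odd.pow_pos_iff (by decide)).1 hpos
  obtain ⟨n, rfl⟩ := Int.eq_ofNat_of_zero_le hN.le
  have hn : 0 < n := by exact_mod_cast hN
  have hcop : IsCoprime y (n : ℤ) := by
    have : IsCoprime y ((n : ℤ) ^ 5) := by
      rw [← h]
      have : IsCoprime y (x ^ 2) := hc.symm.pow_right
      have := this.add_mul_left_right (5 * y)
      have e : x ^ 2 + 5 * y ^ 2 = x ^ 2 + y * (5 * y) := by ring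
      rwa [e]
    exact (IsCoprime.pow_right_iff (by norm_num)).1 this
  obtain ⟨β, η, h0, hu, hv, ⟨k, hk⟩, hη⟩ := c8_lattice (-5) ⟨x, y⟩ n hn n (Or.inl rfl)
    (by rw [Zsqrtd.norm_def]; linear_combination h) hcop
  have hnη : η.norm = k ^ 5 := by
    have := congrArg Zsqrtd.norm hη
    simp only [Zsqrtd.norm_mul, c8_norm_pow, Zsqrtd.norm_conj, hk, Zsqrtd.norm_intCast] at this
    have e : (⟨x, y⟩ : ℤ√(-5)).norm = n ^ 5 := by rw [Zsqrtd.norm_def]; linear_combination h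
    rw [e] at this
    have hn10 : ((n : ℤ) ^ 10) ≠ 0 := by positivity
    apply mul_left_cancel₀ hn10
    linear_combination -this
  have hkey : (⟨x, y⟩ : ℤ√(-5)) * (k : ℤ√(-5)) ^ 5 = η * β ^ 5 := by
    have hb : β * star β = (n : ℤ√(-5)) * k := by
      rw [← Zsqrtd.norm_eq_mul_conj, hk]; push_cast; rfl
    apply c8_cancel ((n : ℤ) ^ 5) (by positivity)
    have h5 : (β * star β) ^ 5 = ((n : ℤ√(-5)) * k) ^ 5 := by rw [hb]
    push_cast at hη ⊢
    linear_combination β ^ 5 * hη - (⟨x, y⟩ : ℤ√(-5)) * h5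
  rw [Zsqrtd.norm_def] at hnη hk
  have hk1 : 0 < k := by
    have : 0 < β.re * β.re - -5 * β.im * β.im := by
      rcases h0 with h0 | h0 <;> nlinarith [sq_nonneg β.re, sq_nonneg β.im, sq_pos_of_ne_zero h0]
    rw [hk] at this
    exact pos_of_mul_pos_right this (by positivity)
  have hk5 : k < 5 := by
    by_contra hcon
    push Not at hcon
    nlinarith
  have hsm := c8_smallnorm η.re η.im (k ^ 5) (by
    have : k ≤ 4 := by omega
    calc k ^ 5 ≤ 4 ^ 5 := pow_le_pow_left₀ hk1.le this 5
      _ = 1024 := by norm_num) (by linear_combination hnη)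
  obtain ⟨d1, d2, d3, d4⟩ := c8_dec32 _ hsm.1 _ hsm.2
  have hre := congrArg Zsqrtd.re hkey
  have him := congrArg Zsqrtd.im hkey
  simp [pow_succ] at hre him
  have hk' : k = 1 ∨ k = 2 ∨ k = 3 ∨ k = 4 := by omega
  rcases hk' with rfl | rfl | rfl | rfl
  · obtain ⟨e1, e2⟩ := d4 (by linear_combination hnη)
    rw [e1] at hre him
    rcases e2 with e2 | e2 <;> rw [e2] at hre him
    · exact ⟨β.re, β.im, by linear_combination hre, by linear_combination him⟩
    · exact ⟨-β.re, -β.im, by linear_combination hre, by linear_combination him⟩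
  · exact absurd (by linear_combination hnη) d1
  · exact absurd (by linear_combination hnη) d2
  · obtain ⟨e1, e2⟩ := d3 (by linear_combination hnη)
    rw [e1] at hre him
    have hpar : Even β.re ∧ Even β.im := by
      have h4 : β.re * β.re + 5 * (β.im * β.im) = 4 * n := by linear_combination hk
      rcases Int.even_or_odd' β.re with ⟨a, ha | ha⟩ <;> rcases Int.even_or_odd' β.im with ⟨b, hb | hb⟩
      · exact ⟨⟨a, by omega⟩, ⟨b, by omega⟩⟩
      all_goals
        exfalso
        rw [ha, hb] at h4
        ring_nf at h4
        omega
    obtain ⟨⟨a, ha⟩, ⟨b, hb⟩⟩ := hpar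
    rw [ha, hb] at hre him
    rcases e2 with e2 | e2 <;> rw [e2] at hre him
    · exact ⟨a, b, by apply c8_canc; linear_combination hre, by apply c8_canc; linear_combination him⟩
    · exact ⟨-a, -b, by apply c8_canc; linear_combination hre, by apply c8_canc; linear_combination him⟩

def c8_fund : Pell.Solution₁ 5 := Pell.Solution₁.mk 9 4 (by norm_num)

theorem c8_isFund : Pell.IsFundamental c8_fund := by
  refine ⟨by simp [c8_fund], by simp [c8_fund], ?_⟩
  intro b hb
  by_contra hcon
  push Not at hcon
  have hp := b.prop
  simp only [c8_fund, Pell.Solution₁.x_mk] at hcon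
  generalize b.x = X at *
  generalize b.y = Y at *
  have hY1 : Y ≤ 4 := by nlinarith
  have hY2 : -4 ≤ Y := by nlinarith
  interval_cases X <;> interval_cases Y <;> omega

theorem c8_fifth_re (x y B : ℤ) (hc : IsCoprime x y) (hB : Odd B) (h5 : (5 : ℤ) ∣ y)
    (h : x ^ 2 - 5 * y ^ 2 = B ^ 5) :
    ∃ c d : ℤ, x = c ^ 5 + 50 * c ^ 3 * d ^ 2 + 125 * c * d ^ 4 ∧
      y = 5 * c ^ 4 * d + 50 * c ^ 2 * d ^ 3 + 25 * d ^ 5 := by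
  have hB0 : B ≠ 0 := by rintro rfl; simp at hB
  obtain ⟨n, hBn⟩ : ∃ n : ℕ, B = n ∨ B = -n := ⟨B.natAbs, Int.natAbs_eq B⟩
  have hn : 0 < n := by
    rcases Nat.eq_zero_or_pos n with h0 | h0
    · subst h0; simp at hBn; exact absurd hBn hB0
    · exact h0
  have hnodd : (n : ℤ) % 2 = 1 := by
    rcases hB with ⟨b, hb⟩; omega
  have hcop : IsCoprime y (n : ℤ) := by
    have : IsCoprime y (B ^ 5) := by
      rw [← h]
      have : IsCoprime y (x ^ 2) := hc.symm.pow_right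
      have := this.add_mul_left_right (-5 * y)
      have e : x ^ 2 - 5 * y ^ 2 = x ^ 2 + y * (-5 * y) := by ring
      rwa [e]
    have := (IsCoprime.pow_right_iff (by norm_num)).1 this
    rcases hBn with e | e
    · rwa [e] at this
    · rw [e] at this; exact (IsCoprime.neg_right_iff _ _).1 this
  have hnα : (⟨x, y⟩ : ℤ√5).norm = B ^ 5 := by rw [Zsqrtd.norm_def]; linear_combination h
  obtain ⟨β, η, h0, hu, hv, ⟨k, hk⟩, hη⟩ := c8_lattice 5 ⟨x, y⟩ n hn B hBn hnα hcop
  have hk' := hk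
  rw [Zsqrtd.norm_def] at hk'
  have hk1 : -3 < k := by
    by_contra hcon
    push Not at hcon
    nlinarith [sq_nonneg β.re, sq_nonneg β.im]
  have hk2 : k < 2 := by
    by_contra hcon
    push Not at hcon
    nlinarith [sq_nonneg β.re, sq_nonneg β.im]
  have hnorm : β.norm ≠ 0 := by
    intro h00
    have hns : ∀ m : ℤ, (5 : ℤ) ≠ m * m := by
      intro m hm
      have : m ≤ 2 := by nlinarith
      have : -2 ≤ m := by nlinarith
      interval_cases m <;> omega
    rw [Zsqrtd.norm_eq_zero hns] at h00
    rw [h00] at h0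
    simp at h0
  have hkne2 : k ≠ -2 := by
    rintro rfl
    have h4 : β.re * β.re - 5 * (β.im * β.im) = -2 * n := by linear_combination hk'
    rcases Int.even_or_odd' β.re with ⟨a, ha | ha⟩ <;> rcases Int.even_or_odd' β.im with ⟨b, hb | hb⟩
    all_goals
      rw [ha, hb] at h4
      ring_nf at h4
      omega
  have hk0 : k ≠ 0 := by
    rintro rfl; simp at hk; exact hnorm hk
  -- arrange norm B
  have hβ' : ∃ γ η' : ℤ√5, γ.norm = B ∧ (⟨x, y⟩ : ℤ√5) * star γ ^ 5 = (B : ℤ√5) ^ 5 * η' := by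
    have hpm : β.norm = B ∨ β.norm = -B := by
      have : k = 1 ∨ k = -1 := by omega
      rcases this with rfl | rfl <;> rcases hBn with e | e <;> rw [hk] <;> simp [e]
    rcases hpm with e | e
    · exact ⟨β, η, e, hη⟩
    · refine ⟨β * ⟨2, 1⟩, η * star ⟨2, 1⟩ ^ 5, ?_, ?_⟩
      · rw [Zsqrtd.norm_mul, e, Zsqrtd.norm_def]; ring
      · rw [star_mul]; linear_combination (star (⟨2, 1⟩ : ℤ√5)) ^ 5 * hη
  obtain ⟨γ, ε, hγ, hε⟩ := hβ'
  have hεn : ε.norm = 1 := by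
    have := congrArg Zsqrtd.norm hε
    simp only [Zsqrtd.norm_mul, c8_norm_pow, Zsqrtd.norm_conj, hγ, Zsqrtd.norm_intCast, hnα] at this
    have hn10 : (B ^ 10) ≠ 0 := pow_ne_zero _ hB0
    apply mul_left_cancel₀ hn10
    linear_combination -this
  have hkey : (⟨x, y⟩ : ℤ√5) = ε * γ ^ 5 := by
    have hb : γ * star γ = (B : ℤ√5) := by
      rw [← Zsqrtd.norm_eq_mul_conj, hγ]
    apply c8_cancel (B ^ 5) (pow_ne_zero _ hB0)
    have h5 : (γ * star γ) ^ 5 = (B : ℤ√5) ^ 5 := by rw [hb]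
    push_cast
    linear_combination γ ^ 5 * hε - (⟨x, y⟩ : ℤ√5) * h5
  -- the unit
  have hunit : ∃ (i : ℕ) (g : ℤ√5), i < 5 ∧ ε = (⟨9, 4⟩ : ℤ√5) ^ i * g ^ 5 := by
    let e : Pell.Solution₁ 5 := Pell.Solution₁.mk ε.re ε.im (by
      rw [Zsqrtd.norm_def] at hεn; linear_combination hεn)
    have hee : ((e : Pell.Solution₁ 5) : ℤ√5) = ε := by
      ext <;> simp [e, Pell.Solution₁.mk]
    have hff : ((c8_fund : Pell.Solution₁ 5) : ℤ√5) = ⟨9, 4⟩ := by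
      ext <;> simp [c8_fund, Pell.Solution₁.mk]
    obtain ⟨m, hm⟩ := c8_isFund.eq_zpow_or_neg_zpow e
    have hsplit : c8_fund ^ m = c8_fund ^ (m % 5).toNat * (c8_fund ^ (m / 5)) ^ 5 := by
      rw [← zpow_natCast, ← zpow_natCast, ← zpow_mul, ← zpow_add]
      congr 1
      have := Int.emod_nonneg m (show (5:ℤ) ≠ 0 by norm_num)
      rw [Int.toNat_of_nonneg this]
      push_cast
      omega
    refine ⟨(m % 5).toNat, ?_⟩
    have hlt : (m % 5).toNat < 5 := by omega
    rcases hm with hm | hm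
    · refine ⟨((c8_fund ^ (m / 5) : Pell.Solution₁ 5) : ℤ√5), hlt, ?_⟩
      rw [← hee, ← hff, hm, hsplit]
      rfl
    · refine ⟨-((c8_fund ^ (m / 5) : Pell.Solution₁ 5) : ℤ√5), hlt, ?_⟩
      rw [← hee, ← hff, hm, hsplit]
      rw [Odd.neg_pow (show Odd 5 by decide), mul_neg]
      rfl
  obtain ⟨i, g, hi, hg⟩ := hunit
  have hfin : (⟨x, y⟩ : ℤ√5) = (⟨9, 4⟩ : ℤ√5) ^ i * (g * γ) ^ 5 := by
    rw [hkey, hg]; ring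
  generalize g * γ = τ at hfin
  have hx := congrArg Zsqrtd.re hfin
  have hy := congrArg Zsqrtd.im hfin
  have hx5 : ¬ (5 : ℤ) ∣ x := by
    intro hd
    have := hc.isUnit_of_dvd' hd h5
    rw [Int.isUnit_iff] at this; omega
  have key : ∀ p q : ℤ, x = p * τ.re ^ 5 + 5 * (p * (10 * τ.re ^ 3 * τ.im ^ 2 + 25 * τ.re * τ.im ^ 4) + q * (5 * τ.re ^ 4 * τ.im + 50 * τ.re ^ 2 * τ.im ^ 3 + 25 * τ.im ^ 5)) →
      y = q * τ.re ^ 5 + 5 * (q * (10 * τ.re ^ 3 * τ.im ^ 2 + 25 * τ.re * τ.im ^ 4) + p * (τ.re ^ 4 * τ.im + 10 * τ.re ^ 2 * τ.im ^ 3 + 5 * τ.im ^ 5)) → ¬ (5 : ℤ) ∣ q → False := by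
    intro p q h1 h2 hq
    have hp5 : Prime (5 : ℤ) := by norm_num
    have : (5 : ℤ) ∣ q * τ.re ^ 5 := by
      rw [h2] at h5
      exact (dvd_add_left (Dvd.intro _ rfl)).1 h5
    have h6 : (5 : ℤ) ∣ τ.re ^ 5 := (hp5.dvd_or_dvd this).resolve_left hq
    apply hx5
    rw [h1]
    exact dvd_add (h6.mul_left _) (Dvd.intro _ rfl)
  interval_cases i
  · simp [pow_succ] at hx hy
    exact ⟨τ.re, τ.im, by linear_combination hx, by linear_combination hy⟩
  · exfalso
    simp [pow_succ] at hx hy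
    exact key 9 4 (by linear_combination hx) (by linear_combination hy) (by norm_num)
  · exfalso
    simp [pow_succ] at hx hy
    exact key 161 72 (by linear_combination hx) (by linear_combination hy) (by norm_num)
  · exfalso
    simp [pow_succ] at hx hy
    exact key 2889 1292 (by linear_combination hx) (by linear_combination hy) (by norm_num)
  · exfalso
    simp [pow_succ] at hx hy
    exact key 51841 23184 (by linear_combination hx) (by linear_combination hy) (by norm_num)

theorem c8_split (P Q n r k : ℤ) (h : P * Q = 5 * n ^ 4) (h5 : (5 : ℤ) ∣ n) (hn : n ≠ 0)
    (hs : P + Q = r ^ 2 + k * n) (hc : IsCoprime r n) :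
    ∃ a b δ : ℤ, (δ = 1 ∨ δ = -1) ∧ ((P = δ * a ^ 4 ∧ Q = 5 * δ * b ^ 4) ∨
      (Q = δ * a ^ 4 ∧ P = 5 * δ * b ^ 4)) ∧ a * b = n ∧ IsCoprime a b := by
  have hPQ : IsCoprime P Q := by
    apply isCoprime_of_prime_dvd
    · rintro ⟨rfl, rfl⟩
      have : n ^ 4 = 0 := by linarith
      exact hn (pow_eq_zero_iff (by norm_num) |>.1 this)
    · intro z hz h1 h2
      have hzn : z ∣ n := by
        have : z ∣ 5 * n ^ 4 := h ▸ h1.mul_right _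
        rcases hz.dvd_or_dvd this with h | h
        · exact h.trans h5
        · exact hz.dvd_of_dvd_pow h
      have hzr : z ∣ r := by
        have : z ∣ r ^ 2 + k * n := hs ▸ dvd_add h1 h2
        exact hz.dvd_of_dvd_pow ((dvd_add_left (hzn.mul_left _)).1 this)
      exact hz.not_isUnit (hc.isUnit_of_dvd' hzr hzn)
  have main : ∀ P Q : ℤ, P * Q = 5 * n ^ 4 → IsCoprime P Q → (5 : ℤ) ∣ Q →
      ∃ a b δ : ℤ, (δ = 1 ∨ δ = -1) ∧ (P = δ * a ^ 4 ∧ Q = 5 * δ * b ^ 4) ∧ a * b = n ∧ IsCoprime a b := by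
    rintro P _ h hPQ ⟨Q, rfl⟩
    have h' : P * Q = n ^ 4 := by linarith
    have hPQ' : IsCoprime P Q := hPQ.of_mul_right_right
    obtain ⟨a, ha⟩ := exists_associated_pow_of_mul_eq_pow' hPQ' h'
    obtain ⟨b, hb⟩ := exists_associated_pow_of_mul_eq_pow' hPQ'.symm (by rw [mul_comm]; exact h')
    rw [Int.associated_iff] at ha hb
    have hn4 : 0 < n ^ 4 := by positivity
    have hP0 : P ≠ 0 := by rintro rfl; rw [← h'] at hn4; simp at hn4
    have hQ0 : Q ≠ 0 := by rintro rfl; rw [← h'] at hn4; simp at hn4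
    have ha4 : 0 ≤ a ^ 4 := by positivity
    have hb4 : 0 ≤ b ^ 4 := by positivity
    have hδ : ∃ δ : ℤ, (δ = 1 ∨ δ = -1) ∧ P = δ * a ^ 4 ∧ Q = δ * b ^ 4 := by
      rcases ha with ha | ha <;> rcases hb with hb | hb
      · exact ⟨1, Or.inl rfl, by linarith, by linarith⟩
      · exfalso
        have : Q ≤ 0 := by linarith
        have : 0 ≤ P := by linarith
        nlinarith
      · exfalso
        have : P ≤ 0 := by linarith
        have : 0 ≤ Q := by linarith
        nlinarith
      · exact ⟨-1, Or.inr rfl, by linarith, by linarith⟩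
    obtain ⟨δ, hδ, e1, e2⟩ := hδ
    have hab : (a * b) ^ 4 = n ^ 4 := by
      rw [← h', e1, e2]
      rcases hδ with rfl | rfl <;> ring
    have hcab : IsCoprime a b := by
      rw [e1, e2] at hPQ'
      have := (hPQ'.of_mul_left_right).of_mul_right_right
      exact (IsCoprime.pow_iff (by norm_num) (by norm_num)).1 this
    rcases (pow_eq_pow_iff_of_ne_zero (n := 4) (by norm_num)).1 hab with h1 | ⟨h1, -⟩
    · exact ⟨a, b, δ, hδ, ⟨e1, by rw [e2]; ring⟩, h1, hcab⟩
    · exact ⟨-a, b, δ, hδ, ⟨by rw [e1]; ring, by rw [e2]; ring⟩, by linarith, hcab.neg_left⟩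
  have hp5 : Prime (5 : ℤ) := by norm_num
  rcases hp5.dvd_or_dvd (Dvd.intro _ h.symm) with h1 | h1
  · obtain ⟨a, b, δ, h1, h2, h3⟩ := main Q P (by linarith) hPQ.symm h1
    exact ⟨a, b, δ, h1, Or.inr h2, h3⟩
  · obtain ⟨a, b, δ, h1, h2, h3⟩ := main P Q h hPQ h1
    exact ⟨a, b, δ, h1, Or.inl h2, h3⟩

theorem c8_split2 (r s Q : ℤ) (i : ℕ) (h : r * s = 2 ^ i * 45 * Q ^ 5) (hc : IsCoprime r s)
    (h2 : ¬ (2 : ℤ) ∣ r) (h3 : ¬ (3 : ℤ) ∣ r) (h5 : ¬ (5 : ℤ) ∣ r) (hQ : ¬ (2 : ℤ) ∣ Q) :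
    ∃ R S : ℤ, r = R ^ 5 ∧ s = 2 ^ i * 45 * S ^ 5 ∧ ¬ (2 : ℤ) ∣ S := by
  have p2 : Prime (2 : ℤ) := Int.prime_two
  have p3 : Prime (3 : ℤ) := Int.prime_three
  have p5 : Prime (5 : ℤ) := by norm_num
  have c2 : IsCoprime (2 : ℤ) r := (Prime.coprime_iff_not_dvd p2).2 h2
  have c3 : IsCoprime (3 : ℤ) r := (Prime.coprime_iff_not_dvd p3).2 h3
  have c5 : IsCoprime (5 : ℤ) r := (Prime.coprime_iff_not_dvd p5).2 h5
  have cc : IsCoprime ((2 : ℤ) ^ i * 45) r := by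
    refine IsCoprime.mul_left c2.pow_left ?_
    have := (c3.mul_left (c3.mul_left c5))
    norm_num at this
    exact this
  have hd : (2 : ℤ) ^ i * 45 ∣ r * s := Dvd.intro _ h.symm
  obtain ⟨s', rfl⟩ := cc.dvd_of_dvd_mul_left hd
  have h' : r * s' = Q ^ 5 := by
    have : ((2 : ℤ) ^ i * 45) ≠ 0 := by positivity
    apply mul_left_cancel₀ this
    linear_combination h
  have hc' : IsCoprime r s' := hc.of_mul_right_right
  obtain ⟨⟨R, hR⟩, ⟨S, hS⟩⟩ := Int.eq_pow_of_mul_eq_pow_odd hc' (by decide : Odd 5) h'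
  refine ⟨R, S, hR, by rw [hS], ?_⟩
  intro hS2
  apply hQ
  apply p2.dvd_of_dvd_pow (n := 5)
  rw [← h', hS]
  exact (dvd_pow hS2 (by norm_num)).mul_left _

theorem c8_z8a : ∀ a b m : ZMod 8, m ^ 2 ≠ (2 * a) ^ 4 + 10 * (2 * a) ^ 2 * (2 * b + 1) ^ 2 + 5 * (2 * b + 1) ^ 4 := by
  decide +kernel
theorem c8_z32a : ∀ a b : ZMod 32, (2 * a + 1) ^ 4 + 10 * (2 * a + 1) ^ 2 * (2 * b + 1) ^ 2 + 5 * (2 * b + 1) ^ 4 = 16 := by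
  decide +kernel
theorem c8_z32b : ∀ F : ZMod 32, (F ^ 5) ^ 2 ≠ 16 := by
  decide +kernel
theorem c8_z8b : ∀ a b m : ZMod 8, m ^ 2 ≠ (4 * a) ^ 4 - 5 * (4 * a) ^ 2 * (2 * b + 1) ^ 2 + 5 * (2 * b + 1) ^ 4 := by
  decide +kernel
theorem c8_z4 : ∀ p q r : ZMod 4, (2 * r + 1) ^ 2 ≠ 10 * (p * q) ^ 2 - (p ^ 4 + 5 * q ^ 4) := by
  decide +kernel
theorem c8_z25 : ∀ F R s : ZMod 25, F ^ 5 = (2 * R ^ 5) ^ 4 - 5 * (5 * s) ^ 4 → 5 * R = 0 := by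
  decide +kernel
theorem c8_z3a : ∀ p s : ZMod 3, p ^ 2 = 5 * s ^ 4 → s = 0 := by
  decide +kernel
theorem c8_dvd3 (s : ℤ) (h : (s : ZMod 3) = 0) : (3 : ℤ) ∣ s :=
  (ZMod.intCast_zmod_eq_zero_iff_dvd s 3).1 h

theorem c8_notcop (z a b : ℤ) (hz : Prime z) (hc : IsCoprime a b) (h1 : z ∣ a) (h2 : z ∣ b) : False :=
  hz.not_isUnit (hc.isUnit_of_dvd' h1 h2)

theorem c8_odd {a : ℤ} (h : ¬ (2 : ℤ) ∣ a) : ∃ b, a = 2 * b + 1 := ⟨a / 2, by omega⟩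

theorem c8_descent (j : ℕ) : ∀ p q Q F : ℤ, IsCoprime p q → q = 2 ^ j * 45 * Q ^ 5 → ¬ (2 : ℤ) ∣ Q →
    (F ^ 5) ^ 2 = p ^ 4 + 10 * p ^ 2 * q ^ 2 + 5 * q ^ 4 → False := by
  have p2 : Prime (2 : ℤ) := Int.prime_two
  have p3 : Prime (3 : ℤ) := Int.prime_three
  have p5 : Prime (5 : ℤ) := by norm_num
  induction j with
  | zero =>
    intro p q Q F hc hq hQ h
    obtain ⟨b, hb⟩ : ∃ b, q = 2 * b + 1 := by
      apply c8_odd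
      rw [hq]
      intro hd
      rcases p2.dvd_or_dvd hd with h | h
      · norm_num at h
      · exact hQ (p2.dvd_of_dvd_pow h)
    rcases Int.even_or_odd' p with ⟨a, ha | ha⟩
    · have := congrArg (Int.cast : ℤ → ZMod 8) h
      rw [ha, hb] at this
      push_cast at this
      exact c8_z8a _ _ _ this
    · have := congrArg (Int.cast : ℤ → ZMod 32) h
      rw [ha, hb] at this
      push_cast at this
      rw [c8_z32a] at this
      exact c8_z32b _ this
  | succ i ih =>
    intro p q Q F hc hq hQ h
    have hQ0 : Q ≠ 0 := by rintro rfl; simp at hQ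
    have hq0 : q ≠ 0 := by rw [hq]; positivity
    have hq2 : (2 : ℤ) ∣ q := by rw [hq, pow_succ]; exact ⟨2 ^ i * 45 * Q ^ 5, by ring⟩
    have hq5 : (5 : ℤ) ∣ q := by rw [hq]; exact ⟨2 ^ (i + 1) * 9 * Q ^ 5, by ring⟩
    have hp2 : ¬ (2 : ℤ) ∣ p := fun h => c8_notcop 2 p q p2 hc h hq2
    have hp5 : ¬ (5 : ℤ) ∣ p := fun h => c8_notcop 5 p q p5 hc h hq5
    set m := F ^ 5 with hm
    obtain ⟨b, hb⟩ := hq2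
    obtain ⟨a, ha⟩ := c8_odd hp2
    obtain ⟨c, hcm⟩ : ∃ c, m = 2 * c + 1 := by
      apply c8_odd
      intro hd
      have : (2 : ℤ) ∣ p ^ 4 := by
        have h1 : (2 : ℤ) ∣ m ^ 2 := dvd_pow hd (by norm_num)
        have e : p ^ 4 = m ^ 2 - 2 * (5 * p ^ 2 * q ^ 2 + 5 * b * q ^ 3) := by
          linear_combination (-5 * q ^ 3) * hb - h
        rw [e]
        exact dvd_sub h1 (Dvd.intro _ rfl)
      exact hp2 (p2.dvd_of_dvd_pow this)
    obtain ⟨P, hP⟩ : ∃ P, p ^ 2 + 5 * q ^ 2 - m = 2 * P :=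
      ⟨2 * a ^ 2 + 2 * a + 10 * b ^ 2 - c, by rw [ha, hb, hcm]; ring⟩
    have hR : p ^ 2 + 5 * q ^ 2 + m = 2 * (P + m) := by linarith
    have hPQ : P * (P + m) = 5 * q ^ 4 := by
      have : 4 * (P * (P + m)) = 4 * (5 * q ^ 4) := by
        have e : 4 * (P * (P + m)) = (2 * P) * (2 * (P + m)) := by ring
        rw [e, ← hP, ← hR]
        linear_combination -h
      linarith
    obtain ⟨r, s, δ, hδ, hrs, hrsq, hcrs⟩ := c8_split P (P + m) q p (5 * q) hPQ hq5 hq0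
      (by linarith) hc
    have hsum : p ^ 2 + 5 * (r * s) ^ 2 = δ * (r ^ 4 + 5 * s ^ 4) := by
      rw [hrsq]
      rcases hrs with ⟨e1, e2⟩ | ⟨e1, e2⟩ <;> linear_combination hP + e1 + e2
    have hδ1 : δ = 1 := by
      rcases hδ with e | e
      · exact e
      · exfalso
        rw [e, hrsq] at hsum
        have : 0 < q ^ 2 := by positivity
        have : 0 ≤ r ^ 4 := by positivity
        have : 0 ≤ s ^ 4 := by positivity
        nlinarith [sq_nonneg p]
    subst hδ1
    have hpp : p ^ 2 = r ^ 4 - 5 * r ^ 2 * s ^ 2 + 5 * s ^ 4 := by linear_combination hsum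
    have hmm : ∃ F' : ℤ, F' ^ 5 = r ^ 4 - 5 * s ^ 4 := by
      rcases hrs with ⟨e1, e2⟩ | ⟨e1, e2⟩
      · exact ⟨-F, by rw [Odd.neg_pow (by decide), ← hm]; linear_combination e1 - e2⟩
      · exact ⟨F, by rw [← hm]; linear_combination e1 - e2⟩
    have hr5 : ¬ (5 : ℤ) ∣ r := by
      intro hd
      apply hp5
      apply p5.dvd_of_dvd_pow (n := 2)
      rw [hpp]
      obtain ⟨z, rfl⟩ := hd
      exact ⟨125 * z ^ 4 - 25 * z ^ 2 * s ^ 2 + s ^ 4, by ring⟩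
    have hr3 : ¬ (3 : ℤ) ∣ r := by
      intro hd
      have h3s : (3 : ℤ) ∣ s := by
        have := congrArg (Int.cast : ℤ → ZMod 3) hpp
        push_cast at this
        rw [(ZMod.intCast_zmod_eq_zero_iff_dvd r 3).2 hd] at this
        exact c8_dvd3 s (c8_z3a (p : ZMod 3) s (by simpa using this))
      exact c8_notcop 3 r s p3 hcrs hd h3s
    by_cases hr2 : (2 : ℤ) ∣ r
    · -- r even
      have hs2 : ¬ (2 : ℤ) ∣ s := fun h => c8_notcop 2 r s p2 hcrs hr2 h
      obtain ⟨r', rfl⟩ := hr2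
      obtain ⟨t, ht⟩ := c8_odd hs2
      have hr'2 : ¬ (2 : ℤ) ∣ r' := by
        rintro ⟨z, rfl⟩
        have := congrArg (Int.cast : ℤ → ZMod 8) hpp
        rw [ht, show (2 : ℤ) * (2 * z) = 4 * z by ring] at this
        push_cast at this
        exact c8_z8b _ _ _ this
      have hprod : r' * s = 2 ^ i * 45 * Q ^ 5 := by
        have : 2 * (r' * s) = 2 * (2 ^ i * 45 * Q ^ 5) := by
          rw [pow_succ] at hq
          linear_combination hrsq + hq
        linarith
      obtain ⟨R, S, hR, hS, -⟩ := c8_split2 r' s Q i hprod hcrs.of_mul_left_right hr'2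
        (fun h => hr3 (h.mul_left _)) (fun h => hr5 (h.mul_left _)) hQ
      obtain ⟨F', hF'⟩ := hmm
      have := congrArg (Int.cast : ℤ → ZMod 25) hF'
      rw [hR, hS, show (2 : ℤ) ^ i * 45 * S ^ 5 = 5 * (2 ^ i * 9 * S ^ 5) by ring] at this
      have h0 := c8_z25 (F' : ZMod 25) (R : ZMod 25) ((2 ^ i * 9 * S ^ 5 : ℤ) : ZMod 25) (by
        rw [← Int.cast_pow F' 5, this]
        push_cast
        rfl)
      have h0' : (25 : ℤ) ∣ 5 * R := by
        apply (ZMod.intCast_zmod_eq_zero_iff_dvd (5 * R) 25).1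
        push_cast
        exact h0
      have h5R : (5 : ℤ) ∣ R := by omega
      apply hr5
      rw [hR]
      exact (dvd_pow h5R (by norm_num)).mul_left _
    · obtain ⟨R, S, hR, hS, hS2⟩ := c8_split2 r s Q (i + 1) (by rw [hrsq, hq]) hcrs hr2 hr3 hr5 hQ
      have hS0 : S ≠ 0 := by rintro rfl; simp at hS2
      obtain ⟨n, hn⟩ : ∃ n, n = (2 : ℤ) ^ i * 45 * S ^ 5 := ⟨_, rfl⟩
      have hsn : s = 2 * n := by rw [hS, hn]; ring
      have hn0 : n ≠ 0 := by rw [hn]; positivity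
      have hn5 : (5 : ℤ) ∣ n := by rw [hn]; exact ⟨2 ^ i * 9 * S ^ 5, by ring⟩
      obtain ⟨e, he⟩ := c8_odd hr2
      have hcrn : IsCoprime r n := by rw [hsn] at hcrs; exact hcrs.of_mul_right_right
      rw [hsn] at hpp
      obtain ⟨P, hP⟩ : ∃ P, r ^ 2 - 10 * n ^ 2 - p = 2 * P :=
        ⟨2 * e ^ 2 + 2 * e - 5 * n ^ 2 - a, by rw [he, ha]; ring⟩
      have hPR : r ^ 2 - 10 * n ^ 2 + p = 2 * (P + p) := by linarith
      have hPQ : P * (P + p) = 5 * n ^ 4 := by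
        have : 4 * (P * (P + p)) = 4 * (5 * n ^ 4) := by
          have e : 4 * (P * (P + p)) = (2 * P) * (2 * (P + p)) := by ring
          rw [e, ← hP, ← hPR]
          linear_combination -hpp
        linarith
      obtain ⟨p1, q1, δ, hδ, hrs', hpq, hcpq⟩ := c8_split P (P + p) n r (-10 * n) hPQ hn5 hn0
        (by linarith) hcrn
      have hsum' : r ^ 2 = 10 * (p1 * q1) ^ 2 + δ * (p1 ^ 4 + 5 * q1 ^ 4) := by
        rw [hpq]
        rcases hrs' with ⟨e1, e2⟩ | ⟨e1, e2⟩ <;> linear_combination hP + e1 + e2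
      rcases hδ with rfl | rfl
      · have hfin : (R ^ 5) ^ 2 = p1 ^ 4 + 10 * p1 ^ 2 * q1 ^ 2 + 5 * q1 ^ 4 := by
          rw [← hR]; linear_combination hsum'
        have hfin' : r ^ 2 = p1 ^ 4 + 10 * p1 ^ 2 * q1 ^ 2 + 5 * q1 ^ 4 := by
          linear_combination hsum'
        have hp1 : ¬ (5 : ℤ) ∣ p1 := by
          intro hd
          apply hr5
          apply p5.dvd_of_dvd_pow (n := 2)
          rw [hfin']
          obtain ⟨z, rfl⟩ := hd
          exact ⟨125 * z ^ 4 + 50 * z ^ 2 * q1 ^ 2 + q1 ^ 4, by ring⟩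
        have hp13 : ¬ (3 : ℤ) ∣ p1 := by
          intro hd
          have h3s : (3 : ℤ) ∣ q1 := by
            have := congrArg (Int.cast : ℤ → ZMod 3) hfin'
            push_cast at this
            rw [(ZMod.intCast_zmod_eq_zero_iff_dvd p1 3).2 hd] at this
            exact c8_dvd3 q1 (c8_z3a (r : ZMod 3) q1 (by simpa using this))
          exact c8_notcop 3 p1 q1 p3 hcpq hd h3s
        have hp12 : ¬ (2 : ℤ) ∣ p1 := by
          intro hd
          obtain ⟨f, hf⟩ := c8_odd (a := q1) (fun h => c8_notcop 2 p1 q1 p2 hcpq hd h)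
          obtain ⟨z, rfl⟩ := hd
          have := congrArg (Int.cast : ℤ → ZMod 8) hfin'
          rw [hf] at this
          push_cast at this
          exact c8_z8a _ _ _ this
        obtain ⟨R1, S1, -, hS1, hS12⟩ := c8_split2 p1 q1 S i (by rw [hpq, hn]) hcpq hp12 hp13 hp1 hS2
        exact ih p1 q1 S1 R hcpq hS1 hS12 hfin
      · have := congrArg (Int.cast : ℤ → ZMod 4) hsum'
        rw [he] at this
        push_cast at this
        apply c8_z4 (p1 : ZMod 4) q1 e
        rw [this]; ring

theorem c8_aux (a W t : ℤ) (h : 27 * a ^ 5 = W ^ 2 + 5 * t ^ 2) (hc : IsCoprime W t) :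
    ∃ t' u v : ℤ, (t' = t ∨ t' = -t) ∧
      2 * W - 5 * t' = u ^ 5 - 50 * u ^ 3 * v ^ 2 + 125 * u * v ^ 4 ∧
      W + 2 * t' = 5 * u ^ 4 * v - 50 * u ^ 2 * v ^ 3 + 25 * v ^ 5 := by
  have p3 : Prime (3 : ℤ) := Int.prime_three
  have h3t : ¬ (3 : ℤ) ∣ t := by
    intro hd
    have : (3 : ℤ) ∣ W := by
      apply p3.dvd_of_dvd_pow (n := 2)
      obtain ⟨z, rfl⟩ := hd
      exact ⟨9 * a ^ 5 - 15 * z ^ 2, by linear_combination -h⟩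
    exact c8_notcop 3 W t p3 hc this hd
  have hd : (3 : ℤ) ∣ (W + t) * (W - t) := ⟨9 * a ^ 5 - 2 * t ^ 2, by linear_combination -h⟩
  have main : ∀ t : ℤ, 27 * a ^ 5 = W ^ 2 + 5 * t ^ 2 → IsCoprime W t → ¬ (3 : ℤ) ∣ t → (3 : ℤ) ∣ W + t →
      ∃ u v : ℤ, 2 * W - 5 * t = u ^ 5 - 50 * u ^ 3 * v ^ 2 + 125 * u * v ^ 4 ∧
      W + 2 * t = 5 * u ^ 4 * v - 50 * u ^ 2 * v ^ 3 + 25 * v ^ 5 := by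
    intro t h hc h3t hd
    apply c8_fifth_im _ _ (3 * a)
    · apply isCoprime_of_prime_dvd
      · rintro ⟨h1, h2⟩; omega
      · intro z hz h1 h2
        have hz3 : ¬ z ∣ 3 := by
          intro h3
          have := p3.irreducible.dvd_symm hz.irreducible
          have h33 : (3 : ℤ) ∣ z := hz.irreducible.dvd_symm p3.irreducible h3
          have := h33.trans h2
          omega
        have hz9 : ∀ s : ℤ, z ∣ 9 * s → z ∣ s := by
          intro s hs
          rcases hz.dvd_or_dvd hs with h | h
          · exact absurd (hz.dvd_of_dvd_pow (n := 2) (by norm_num; exact h)) hz3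
          · exact h
        have e1 : z ∣ 9 * t := by
          have e : 9 * t = 2 * (W + 2 * t) - (2 * W - 5 * t) := by ring
          rw [e]; exact dvd_sub (h2.mul_left 2) h1
        have e2 : z ∣ 9 * W := by
          have e : 9 * W = 5 * (W + 2 * t) + 2 * (2 * W - 5 * t) := by ring
          rw [e]; exact dvd_add (h2.mul_left 5) (h1.mul_left 2)
        exact c8_notcop z W t hz hc (hz9 _ e2) (hz9 _ e1)
    · linear_combination (-9) * h
  rcases p3.dvd_or_dvd hd with h1 | h1
  · obtain ⟨u, v, h2⟩ := main t h hc h3t h1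
    exact ⟨t, u, v, Or.inl rfl, h2⟩
  · obtain ⟨u, v, h2⟩ := main (-t) (by rw [h]; ring) hc.neg_right (by rwa [dvd_neg]) (by rwa [← sub_eq_add_neg])
    exact ⟨-t, u, v, Or.inr rfl, h2⟩

theorem c8_z25a : ∀ w u : ZMod 25, 9 * w ^ 5 = 2 * u ^ 5 → 5 * w = 0 := by
  decide +kernel
theorem c8_z25b : ∀ w u : ZMod 25, 3 * w ^ 5 = u ^ 5 → 5 * w = 0 := by
  decide +kernel

theorem c8_five {w : ℤ} (h : (5 : ZMod 25) * w = 0) : (5 : ℤ) ∣ w := by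
  have h0' : (25 : ℤ) ∣ 5 * w := by
    apply (ZMod.intCast_zmod_eq_zero_iff_dvd (5 * w) 25).1
    push_cast
    exact h
  omega

theorem c8_twenty5 : (25 : ZMod 25) = 0 := by decide

theorem c8_cop27 (a w A B t : ℤ) (k : ℤ) (hA : 27 * a ^ 5 = A + B) (hc : IsCoprime a w)
    (hw3 : (3 : ℤ) ∣ w → (3 : ℤ) ∣ t → False) (hAw : ∀ z, z ∣ w → z ∣ A) (hB : ∀ z, z ∣ t → z ∣ B)
    (h5 : k = 1) :
    ∀ z : ℤ, Prime z → z ∣ w → z ∣ t → False := by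
  intro z hz h1 h2
  have p3 : Prime (3 : ℤ) := Int.prime_three
  have : z ∣ 27 * a ^ 5 := hA ▸ dvd_add (hAw z h1) (hB z h2)
  rcases hz.dvd_or_dvd this with h | h
  · have h3 : z ∣ 3 := hz.dvd_of_dvd_pow (n := 3) (by norm_num; exact h)
    have h33 : (3 : ℤ) ∣ z := hz.irreducible.dvd_symm p3.irreducible h3
    exact hw3 (h33.trans h1) (h33.trans h2)
  · exact c8_notcop z a w hz hc (hz.dvd_of_dvd_pow h) h1

theorem c8_case1 (a w t : ℤ) (h : 27 * a ^ 5 = w ^ 10 + 5 * t ^ 2) (hc : IsCoprime a w) : False := by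
  have p3 : Prime (3 : ℤ) := Int.prime_three
  have p5 : Prime (5 : ℤ) := by norm_num
  have hcop := c8_cop27 a w (w ^ 10) (5 * t ^ 2) t 1 h hc (by
    intro h1 h2
    apply c8_notcop 3 a w p3 hc _ h1
    obtain ⟨w1, rfl⟩ := h1
    obtain ⟨t1, rfl⟩ := h2
    have e : 3 * a ^ 5 = 3 ^ 8 * w1 ^ 10 + 5 * t1 ^ 2 := by
      have : 9 * (3 * a ^ 5) = 9 * (3 ^ 8 * w1 ^ 10 + 5 * t1 ^ 2) := by linear_combination h
      linarith
    obtain ⟨t2, rfl⟩ : (3 : ℤ) ∣ t1 := by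
      apply p3.dvd_of_dvd_pow (n := 2)
      exact ⟨2 * t1 ^ 2 - a ^ 5 + 3 ^ 7 * w1 ^ 10, by linear_combination e⟩
    apply p3.dvd_of_dvd_pow (n := 5)
    exact ⟨3 ^ 6 * w1 ^ 10 + 5 * t2 ^ 2, by linarith⟩)
    (fun z hz => dvd_pow hz (by norm_num)) (fun z hz => (dvd_pow hz (by norm_num)).mul_left _) rfl
  have hc2 : IsCoprime (w ^ 5) t := by
    apply IsCoprime.pow_left
    apply isCoprime_of_prime_dvd
    · rintro ⟨rfl, rfl⟩
      exact hcop 3 p3 (by simp) (by simp)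
    · exact fun z hz h1 h2 => hcop z hz h1 h2
  obtain ⟨t', u, v, -, e1, e2⟩ := c8_aux a (w ^ 5) t (by rw [h]; ring) hc2
  have e3 : 9 * w ^ 5 = 2 * u ^ 5 + 25 * (-4 * u ^ 3 * v ^ 2 + 10 * u * v ^ 4 + u ^ 4 * v - 10 * u ^ 2 * v ^ 3 + 5 * v ^ 5) := by
    linear_combination 2 * e1 + 5 * e2
  have := congrArg (Int.cast : ℤ → ZMod 25) e3
  push_cast at this
  rw [c8_twenty5, zero_mul, add_zero] at this
  have h5w := c8_five (c8_z25a _ _ this)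
  have h5a : (5 : ℤ) ∣ a := by
    have : (5 : ℤ) ∣ 27 * a ^ 5 := by
      rw [h]; exact dvd_add (dvd_pow h5w (by norm_num)) (Dvd.intro _ rfl)
    rcases p5.dvd_or_dvd this with h | h
    · norm_num at h
    · exact p5.dvd_of_dvd_pow h
  exact c8_notcop 5 a w p5 hc h5a h5w

theorem c8_case2 (a w t : ℤ) (h : 27 * a ^ 5 = 5 ^ 5 * w ^ 10 + t ^ 2) (hc : IsCoprime a (5 * w)) :
    False := by
  have p3 : Prime (3 : ℤ) := Int.prime_three
  have p5 : Prime (5 : ℤ) := by norm_num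
  have h5 : (5 : ℤ) ∣ t → False := by
    intro ht
    have : (5 : ℤ) ∣ 27 * a ^ 5 := by
      rw [h]; exact dvd_add ⟨5 ^ 4 * w ^ 10, by ring⟩ (dvd_pow ht (by norm_num))
    rcases p5.dvd_or_dvd this with h | h
    · norm_num at h
    · exact c8_notcop 5 a (5 * w) p5 hc (p5.dvd_of_dvd_pow h) (Dvd.intro _ rfl)
  have hcop := c8_cop27 a w (5 ^ 5 * w ^ 10) (t ^ 2) t 1 h hc.of_mul_right_right (by
    intro h1 h2
    apply c8_notcop 3 a w p3 hc.of_mul_right_right _ h1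
    obtain ⟨w1, rfl⟩ := h1
    obtain ⟨t1, rfl⟩ := h2
    have e : 3 * a ^ 5 = 5 ^ 5 * 3 ^ 8 * w1 ^ 10 + t1 ^ 2 := by
      have : 9 * (3 * a ^ 5) = 9 * (5 ^ 5 * 3 ^ 8 * w1 ^ 10 + t1 ^ 2) := by linear_combination h
      linarith
    obtain ⟨t2, rfl⟩ : (3 : ℤ) ∣ t1 := by
      apply p3.dvd_of_dvd_pow (n := 2)
      exact ⟨a ^ 5 - 5 ^ 5 * 3 ^ 7 * w1 ^ 10, by linear_combination -e⟩
    apply p3.dvd_of_dvd_pow (n := 5)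
    exact ⟨5 ^ 5 * 3 ^ 6 * w1 ^ 10 + t2 ^ 2, by linarith⟩)
    (fun z hz => (dvd_pow hz (by norm_num)).mul_left _) (fun z hz => (dvd_pow hz (by norm_num))) rfl
  have hc2 : IsCoprime t (25 * w ^ 5) := by
    have c5 : IsCoprime t 5 := ((Prime.coprime_iff_not_dvd p5).2 h5).symm
    have : IsCoprime t 25 := by
      have := c5.mul_right c5; norm_num at this; exact this
    apply this.mul_right
    apply IsCoprime.pow_right
    apply isCoprime_of_prime_dvd
    · rintro ⟨rfl, rfl⟩
      exact hcop 3 p3 (by simp) (by simp)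
    · exact fun z hz h1 h2 => hcop z hz h2 h1
  obtain ⟨t', u, v, ht', e1, e2⟩ := c8_aux a t (25 * w ^ 5) (by rw [h]; ring) hc2
  apply h5
  rcases ht' with rfl | rfl
  · exact ⟨u ^ 4 * v - 10 * u ^ 2 * v ^ 3 + 5 * v ^ 5 - 10 * w ^ 5, by linear_combination e2⟩
  · exact ⟨u ^ 4 * v - 10 * u ^ 2 * v ^ 3 + 5 * v ^ 5 + 10 * w ^ 5, by linear_combination e2⟩

theorem c8_case3 (a w t : ℤ) (h : a ^ 5 = 9 * w ^ 10 + 5 * t ^ 2) (hc : IsCoprime a (3 * w)) :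
    False := by
  have p5 : Prime (5 : ℤ) := by norm_num
  have hc2 : IsCoprime (3 * w ^ 5) t := by
    have h1 : IsCoprime (a ^ 5) (3 * w ^ 5) :=
      (hc.of_mul_right_left.mul_right hc.of_mul_right_right.pow_right).pow_left
    rw [h, show 9 * w ^ 10 + 5 * t ^ 2 = t * (5 * t) + (3 * w ^ 5) * (3 * w ^ 5) by ring] at h1
    exact ((IsCoprime.add_mul_left_left_iff).1 h1).of_mul_left_left.symm
  obtain ⟨u, v, e1, e2⟩ := c8_fifth_im (3 * w ^ 5) t a hc2 (by rw [h]; ring)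
  have e3 : 3 * w ^ 5 = u ^ 5 + 25 * (-2 * u ^ 3 * v ^ 2 + 5 * u * v ^ 4) := by
    linear_combination e1
  have := congrArg (Int.cast : ℤ → ZMod 25) e3
  push_cast at this
  rw [c8_twenty5, zero_mul, add_zero] at this
  have h5w := c8_five (c8_z25b _ _ this)
  have h5a : (5 : ℤ) ∣ a := by
    apply p5.dvd_of_dvd_pow (n := 5)
    rw [h]; exact dvd_add ((dvd_pow h5w (by norm_num)).mul_left _) (Dvd.intro _ rfl)
  exact c8_notcop 5 a w p5 hc.of_mul_right_right h5a h5w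

theorem c8_z3b : ∀ u v : ZMod 3, u ^ 4 - 10 * u ^ 2 * v ^ 2 + 5 * v ^ 4 = 0 → u = 0 ∧ v = 0 := by
  decide +kernel
theorem c8_z3c : ∀ u v : ZMod 3, u ^ 4 + 10 * u ^ 2 * v ^ 2 + 5 * v ^ 4 = 0 → u = 0 ∧ v = 0 := by
  decide +kernel
theorem c8_z8c : ∀ a b B : ZMod 8, B ^ 5 ≠ (2 * a + 1) ^ 4 - 10 * (2 * a + 1) ^ 2 * (2 * b + 1) ^ 2 + 5 * (2 * b + 1) ^ 4 := by
  decide +kernel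

theorem c8_case4 (a w t : ℤ) (hw : w ≠ 0) (h : a ^ 5 = 9 * 5 ^ 5 * w ^ 10 + t ^ 2)
    (hc : IsCoprime a (15 * w)) : False := by
  have p2 : Prime (2 : ℤ) := Int.prime_two
  have p3 : Prime (3 : ℤ) := Int.prime_three
  have p5 : Prime (5 : ℤ) := by norm_num
  have hc2 : IsCoprime t (75 * w ^ 5) := by
    have h5 : IsCoprime a 5 := by
      have := hc.of_mul_right_left
      rw [show (15 : ℤ) = 3 * 5 by norm_num] at this
      exact this.of_mul_right_right
    have h1 : IsCoprime (a ^ 5) (75 * w ^ 5) := by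
      rw [show (75 : ℤ) * w ^ 5 = (15 * 5) * w ^ 5 by ring]
      exact ((hc.of_mul_right_left.mul_right h5).mul_right hc.of_mul_right_right.pow_right).pow_left
    rw [h, show 9 * 5 ^ 5 * w ^ 10 + t ^ 2 = t * t + (75 * w ^ 5) * (375 * w ^ 5) by ring] at h1
    exact ((IsCoprime.add_mul_left_left_iff).1 h1).of_mul_left_left
  obtain ⟨u, v, e1, e2⟩ := c8_fifth_im t (75 * w ^ 5) a hc2 (by rw [h]; ring)
  have huv : IsCoprime u v := by
    rw [e1, e2, show u ^ 5 - 50 * u ^ 3 * v ^ 2 + 125 * u * v ^ 4 = u * (u ^ 4 - 50 * u ^ 2 * v ^ 2 + 125 * v ^ 4) by ring,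
      show 5 * u ^ 4 * v - 50 * u ^ 2 * v ^ 3 + 25 * v ^ 5 = v * (5 * u ^ 4 - 50 * u ^ 2 * v ^ 2 + 25 * v ^ 4) by ring] at hc2
    exact hc2.of_mul_left_left.of_mul_right_left
  have h5u : ¬ (5 : ℤ) ∣ u := by
    intro hd
    have h5t : (5 : ℤ) ∣ t := by
      rw [e1]
      obtain ⟨z, rfl⟩ := hd
      exact ⟨5 ^ 4 * z ^ 5 - 10 * (5 * z) ^ 3 * v ^ 2 + 25 * (5 * z) * v ^ 4, by ring⟩
    exact c8_notcop 5 t (75 * w ^ 5) p5 hc2 h5t ⟨15 * w ^ 5, by ring⟩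
  obtain ⟨K, hK⟩ : ∃ K, K = u ^ 4 - 10 * u ^ 2 * v ^ 2 + 5 * v ^ 4 := ⟨_, rfl⟩
  have e3 : v * K = 15 * w ^ 5 := by rw [hK]; linarith
  have hvK : IsCoprime v K := by
    have : IsCoprime v (u ^ 4) := huv.symm.pow_right
    have := this.add_mul_left_right (-10 * u ^ 2 * v + 5 * v ^ 3)
    rw [hK]
    rwa [show u ^ 4 - 10 * u ^ 2 * v ^ 2 + 5 * v ^ 4 = u ^ 4 + v * (-10 * u ^ 2 * v + 5 * v ^ 3) by ring]
  have hK5 : ¬ (5 : ℤ) ∣ K := by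
    intro hd
    apply h5u
    apply p5.dvd_of_dvd_pow (n := 4)
    rw [show u ^ 4 = K + 5 * (2 * u ^ 2 * v ^ 2 - v ^ 4) by rw [hK]; ring]
    exact dvd_add hd (Dvd.intro _ rfl)
  have hK3 : ¬ (3 : ℤ) ∣ K := by
    intro hd
    have := (ZMod.intCast_zmod_eq_zero_iff_dvd K 3).2 hd
    rw [hK] at this
    push_cast at this
    obtain ⟨h1, h2⟩ := c8_z3b _ _ this
    exact c8_notcop 3 u v p3 huv (c8_dvd3 _ h1) (c8_dvd3 _ h2)
  obtain ⟨v', hv⟩ : (15 : ℤ) ∣ v := by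
    have c : IsCoprime (15 : ℤ) K := by
      have := ((Prime.coprime_iff_not_dvd p3).2 hK3).mul_left ((Prime.coprime_iff_not_dvd p5).2 hK5)
      norm_num at this; exact this
    exact c.dvd_of_dvd_mul_right (Dvd.intro _ e3.symm)
  have e4 : v' * K = w ^ 5 := by
    have := e3
    rw [hv] at this
    linarith
  have hvK2 : IsCoprime v' K := by
    rw [hv] at hvK
    exact hvK.of_mul_left_right
  obtain ⟨⟨A, hA⟩, ⟨B, hB⟩⟩ := Int.eq_pow_of_mul_eq_pow_odd hvK2 (by decide : Odd 5) e4
  have hA0 : A ≠ 0 := by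
    rintro rfl
    apply hw
    have : w ^ 5 = 0 := by rw [← e4, hA]; ring
    exact (pow_eq_zero_iff (by norm_num)).1 this
  have hpar : ¬ ((2 : ℤ) ∣ u ^ 2 - 5 * v ^ 2) := by
    intro hd
    by_cases h2u : (2 : ℤ) ∣ u
    · have : (2 : ℤ) ∣ v ^ 2 := by
        have h1 : (2 : ℤ) ∣ u ^ 2 := dvd_pow h2u (by norm_num)
        omega
      exact c8_notcop 2 u v p2 huv h2u (p2.dvd_of_dvd_pow this)
    · by_cases h2v : (2 : ℤ) ∣ v
      · apply h2u
        apply p2.dvd_of_dvd_pow (n := 2)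
        have h1 : (2 : ℤ) ∣ v ^ 2 := dvd_pow h2v (by norm_num)
        omega
      · obtain ⟨f, hf⟩ := c8_odd h2u
        obtain ⟨g, hg⟩ := c8_odd h2v
        have := congrArg (Int.cast : ℤ → ZMod 8) (hB.symm.trans hK)
        rw [hf, hg] at this
        push_cast at this
        exact c8_z8c _ _ _ this
  have hBodd : Odd B := by
    rw [← Int.not_even_iff_odd, even_iff_two_dvd]
    intro hd
    apply hpar
    apply p2.dvd_of_dvd_pow (n := 2)
    have : (2 : ℤ) ∣ B ^ 5 := dvd_pow hd (by norm_num)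
    rw [← hB, hK] at this
    rw [show (u ^ 2 - 5 * v ^ 2) ^ 2 = (u ^ 4 - 10 * u ^ 2 * v ^ 2 + 5 * v ^ 4) + 2 * (10 * v ^ 4) by ring]
    exact dvd_add this (Dvd.intro _ rfl)
  have hcxy : IsCoprime (u ^ 2 - 5 * v ^ 2) (2 * v ^ 2) := by
    apply IsCoprime.mul_right
    · exact ((Prime.coprime_iff_not_dvd p2).2 hpar).symm
    · apply IsCoprime.pow_right
      have : IsCoprime (u ^ 2) v := huv.pow_left
      have := this.add_mul_left_left (-5 * v)
      rwa [show u ^ 2 - 5 * v ^ 2 = u ^ 2 + v * (-5 * v) by ring]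
  obtain ⟨c, d, f1, f2⟩ := c8_fifth_re (u ^ 2 - 5 * v ^ 2) (2 * v ^ 2) B hcxy hBodd
    ⟨90 * v' ^ 2, by rw [hv]; ring⟩ (by rw [← hB, hK]; ring)
  have hcd : IsCoprime c d := by
    rw [f1, f2, show c ^ 5 + 50 * c ^ 3 * d ^ 2 + 125 * c * d ^ 4 = c * (c ^ 4 + 50 * c ^ 2 * d ^ 2 + 125 * d ^ 4) by ring,
      show 5 * c ^ 4 * d + 50 * c ^ 2 * d ^ 3 + 25 * d ^ 5 = d * (5 * c ^ 4 + 50 * c ^ 2 * d ^ 2 + 25 * d ^ 4) by ring] at hcxy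
    exact hcxy.of_mul_left_left.of_mul_right_left
  have hc2' : ¬ (2 : ℤ) ∣ c := by
    rintro ⟨z, rfl⟩
    apply hpar
    rw [f1]
    exact ⟨2 ^ 4 * z ^ 5 + 25 * (2 * z) ^ 3 * d ^ 2 + 125 * z * d ^ 4, by ring⟩
  have hc5 : ¬ (5 : ℤ) ∣ c := by
    rintro ⟨z, rfl⟩
    apply h5u
    apply p5.dvd_of_dvd_pow (n := 2)
    exact ⟨5 ^ 4 * z ^ 5 + 10 * (5 * z) ^ 3 * d ^ 2 + 125 * z * d ^ 4 + v ^ 2, by linear_combination f1⟩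
  have hd2 : (2 : ℤ) ∣ d := by
    by_contra hd
    obtain ⟨f, hf⟩ := c8_odd hc2'
    obtain ⟨g, hg⟩ := c8_odd hd
    apply hpar
    rw [f1]
    have e : c ^ 5 + 50 * c ^ 3 * d ^ 2 + 125 * c * d ^ 4 = c * (c ^ 4 + 50 * c ^ 2 * d ^ 2 + 125 * d ^ 4) := by ring
    rw [e]
    apply Dvd.dvd.mul_left
    have e2 : Even (c ^ 4 + 50 * c ^ 2 * d ^ 2 + 125 * d ^ 4) := by
      have o1 : Odd c := ⟨f, hf⟩
      have o2 : Odd d := ⟨g, hg⟩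
      have e50 : Even (50 * c ^ 2 * d ^ 2) := ⟨25 * c ^ 2 * d ^ 2, by ring⟩
      have o125 : Odd (125 * d ^ 4) := Odd.mul (by decide) o2.pow
      exact (o1.pow.add_even e50).add_odd o125
    exact even_iff_two_dvd.1 e2
  obtain ⟨L, hL⟩ : ∃ L, L = c ^ 4 + 10 * c ^ 2 * d ^ 2 + 5 * d ^ 4 := ⟨_, rfl⟩
  have f3 : d * L = 90 * A ^ 10 := by
    rw [hv, hA] at f2
    rw [hL]
    linarith
  have hdL : IsCoprime d L := by
    have : IsCoprime d (c ^ 4) := hcd.symm.pow_right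
    have := this.add_mul_left_right (10 * c ^ 2 * d + 5 * d ^ 3)
    rw [hL]
    rwa [show c ^ 4 + 10 * c ^ 2 * d ^ 2 + 5 * d ^ 4 = c ^ 4 + d * (10 * c ^ 2 * d + 5 * d ^ 3) by ring]
  have hL2 : ¬ (2 : ℤ) ∣ L := fun h => c8_notcop 2 d L p2 hdL hd2 h
  have hL5 : ¬ (5 : ℤ) ∣ L := by
    intro hd
    apply hc5
    apply p5.dvd_of_dvd_pow (n := 4)
    rw [show c ^ 4 = L + 5 * (-2 * c ^ 2 * d ^ 2 - d ^ 4) by rw [hL]; ring]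
    exact dvd_add hd (Dvd.intro _ rfl)
  have hL3 : ¬ (3 : ℤ) ∣ L := by
    intro hd
    have := (ZMod.intCast_zmod_eq_zero_iff_dvd L 3).2 hd
    rw [hL] at this
    push_cast at this
    obtain ⟨h1, h2⟩ := c8_z3c _ _ this
    exact c8_notcop 3 c d p3 hcd (c8_dvd3 _ h1) (c8_dvd3 _ h2)
  obtain ⟨d', hd'⟩ : (90 : ℤ) ∣ d := by
    have c : IsCoprime (90 : ℤ) L := by
      have k3 := (Prime.coprime_iff_not_dvd p3).2 hL3
      have := (k3.mul_left k3).mul_left (((Prime.coprime_iff_not_dvd p5).2 hL5).mul_left ((Prime.coprime_iff_not_dvd p2).2 hL2))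
      norm_num at this; exact this
    exact c.dvd_of_dvd_mul_right (Dvd.intro _ f3.symm)
  have f4 : d' * L = A ^ 10 := by
    rw [hd'] at f3; linarith
  have hd'L : IsCoprime d' L := by rw [hd'] at hdL; exact hdL.of_mul_left_right
  obtain ⟨E, hE⟩ := exists_associated_pow_of_mul_eq_pow' hd'L.symm (by rw [mul_comm]; exact f4)
  have hLpos : 0 ≤ L := by rw [hL]; positivity
  have hE10 : (E ^ 5) ^ 2 = L := by
    rw [Int.associated_iff] at hE
    have : 0 ≤ E ^ 10 := by positivity
    rcases hE with hE | hE
    · rw [← hE]; ring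
    · have h1 : L = 0 := by linarith
      exact absurd (h1 ▸ dvd_zero 2) hL2
  obtain ⟨D, hD⟩ := Int.eq_pow_of_mul_eq_pow_odd_left hd'L (by decide : Odd 5)
    (show d' * L = (A ^ 2) ^ 5 by rw [f4]; ring)
  have hD0 : D ≠ 0 := by
    rintro rfl
    have : A ^ 10 = 0 := by rw [← f4, hD]; ring
    exact hA0 ((pow_eq_zero_iff (by norm_num)).1 this)
  obtain ⟨i, D', hD', hDi⟩ : ∃ (i : ℕ) (D' : ℤ), ¬ (2 : ℤ) ∣ D' ∧ D = 2 ^ i * D' := by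
    have hf : FiniteMultiplicity (2 : ℤ) D := Int.finiteMultiplicity_iff.2 ⟨by norm_num, hD0⟩
    obtain ⟨D', h1, h2⟩ := hf.exists_eq_pow_mul_and_not_dvd
    exact ⟨_, D', h2, h1⟩
  refine c8_descent (5 * i + 1) c d D' E hcd ?_ hD' (by rw [hE10, hL])
  rw [hd', hD, hDi]
  ring

theorem c8_sq (b c T : ℤ) (hb : 0 < b) (h : b * c = T ^ 2) (hc : IsCoprime b c) :
    ∃ w t : ℤ, w ≠ 0 ∧ b = w ^ 2 ∧ c = t ^ 2 := by
  have hc0 : 0 ≤ c := by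
    by_contra hcon
    push Not at hcon
    nlinarith [sq_nonneg T]
  obtain ⟨w, hw⟩ := Int.sq_of_isCoprime hc h
  obtain ⟨t, ht⟩ := Int.sq_of_isCoprime hc.symm (by rw [mul_comm]; exact h)
  have hw2 : b = w ^ 2 := by
    rcases hw with h | h
    · exact h
    · nlinarith [sq_nonneg w]
  refine ⟨w, t, ?_, hw2, ?_⟩
  · rintro rfl; simp at hw2; omega
  · rcases ht with h | h
    · exact h
    · nlinarith [sq_nonneg t]

theorem c8_int (a b T : ℤ) (hb : 0 < b) (hc : IsCoprime a b)
    (h : T ^ 2 = 5 * b * (27 * a ^ 5 - b ^ 5)) : False := by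
  have p3 : Prime (3 : ℤ) := Int.prime_three
  have p5 : Prime (5 : ℤ) := by norm_num
  obtain ⟨T', rfl⟩ : (5 : ℤ) ∣ T := p5.dvd_of_dvd_pow (n := 2) ⟨b * (27 * a ^ 5 - b ^ 5), by rw [h]; ring⟩
  have h' : 5 * T' ^ 2 = b * (27 * a ^ 5 - b ^ 5) := by linarith
  have nine : ∀ S x : ℤ, S ^ 2 = 81 * x → ∃ S', x = S' ^ 2 := by
    intro S x hS
    have : (9 : ℤ) ∣ S := by
      have : (9 : ℤ) ^ 2 ∣ S ^ 2 := ⟨x, by rw [hS]; norm_num⟩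
      exact (Int.pow_dvd_pow_iff (by norm_num)).1 this
    obtain ⟨S', rfl⟩ := this
    exact ⟨S', by linarith⟩
  have cop : ∀ b' x k : ℤ, IsCoprime a b' → x = a ^ 5 + b' * k → IsCoprime b' x := by
    intro b' x k h1 h2
    rw [h2]
    exact (h1.symm.pow_right (n := 5)).add_mul_left_right k
  have cop27 : ∀ b' x k : ℤ, ¬ (3 : ℤ) ∣ b' → IsCoprime a b' → x = 27 * a ^ 5 + b' * k → IsCoprime b' x := by
    intro b' x k h3 h1 h2
    rw [h2]
    have k3 : IsCoprime b' 3 := ((Prime.coprime_iff_not_dvd p3).2 h3).symm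
    have k27 : IsCoprime b' 27 := by
      have := k3.pow_right (n := 3); norm_num at this; exact this
    exact (k27.mul_right (h1.symm.pow_right (n := 5))).add_mul_left_right k
  rcases p5.dvd_or_dvd (Dvd.intro _ h') with ⟨b1, rfl⟩ | ⟨c1, hc1⟩
  · by_cases h3 : (3 : ℤ) ∣ b1
    · obtain ⟨b2, rfl⟩ := h3
      obtain ⟨S, hS⟩ := nine T' (b2 * (a ^ 5 - 9 * 5 ^ 5 * b2 ^ 5)) (by linarith)
      have hcb : IsCoprime a b2 := hc.of_mul_right_right.of_mul_right_right
      obtain ⟨w, t, hw, e1, e2⟩ := c8_sq b2 _ S (by linarith) hS (cop _ _ (-9 * 5 ^ 5 * b2 ^ 4) hcb (by ring))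
      refine c8_case4 a w t hw (by rw [← e2, e1]; ring) ?_
      have : IsCoprime a ((15 * w) * w) := by
        rw [e1] at hc; convert hc using 1; ring
      exact this.of_mul_right_left
    · have hS : b1 * (27 * a ^ 5 - 5 ^ 5 * b1 ^ 5) = T' ^ 2 := by linarith
      obtain ⟨w, t, hw, e1, e2⟩ := c8_sq b1 _ T' (by linarith) hS
        (cop27 _ _ (-5 ^ 5 * b1 ^ 4) h3 hc.of_mul_right_right (by ring))
      refine c8_case2 a w t (by rw [← e2, e1]; ring) ?_
      have : IsCoprime a ((5 * w) * w) := by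
        rw [e1] at hc; convert hc using 1; ring
      exact this.of_mul_right_left
  · rw [hc1] at h'
    have h2 : b * c1 = T' ^ 2 := by linarith
    by_cases h3 : (3 : ℤ) ∣ b
    · obtain ⟨b2, rfl⟩ := h3
      obtain ⟨c2, rfl⟩ : (27 : ℤ) ∣ c1 := by
        have : (27 : ℤ) ∣ 5 * c1 := ⟨a ^ 5 - 9 * b2 ^ 5, by rw [← hc1]; ring⟩
        omega
      have hc2 : a ^ 5 - 9 * b2 ^ 5 = 5 * c2 := by linarith
      obtain ⟨S, hS⟩ := nine T' (b2 * c2) (by linarith)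
      have hcb : IsCoprime a b2 := hc.of_mul_right_right
      have : IsCoprime b2 (5 * c2) := cop _ _ (-9 * b2 ^ 4) hcb (by rw [← hc2]; ring)
      obtain ⟨w, t, hw, e1, e2⟩ := c8_sq b2 _ S (by linarith) hS this.of_mul_right_right
      refine c8_case3 a w t (by rw [← e2]; rw [e1] at hc2; linear_combination hc2) ?_
      have : IsCoprime a ((3 * w) * w) := by
        rw [e1] at hc; convert hc using 1; ring
      exact this.of_mul_right_left
    · have : IsCoprime b (5 * c1) := cop27 _ _ (-b ^ 4) h3 hc (by rw [← hc1]; ring)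
      obtain ⟨w, t, hw, e1, e2⟩ := c8_sq b _ T' hb h2 this.of_mul_right_right
      refine c8_case1 a w t (by rw [← e2]; rw [e1] at hc1; linear_combination hc1) ?_
      rw [e1, pow_two] at hc
      exact hc.of_mul_right_left

theorem no_rational_points_case8 (X Y : ℚ) :
    Y ^ 2 ≠ 3 ^ 3 * 5 * X ^ 5 - 5 := by
  intro h
  have hb : (X.den : ℚ) ≠ 0 := by exact_mod_cast X.den_nz
  have hX : X = X.num / X.den := (Rat.num_div_den X).symm
  have hsq : IsSquare (((5 * X.den * (27 * X.num ^ 5 - X.den ^ 5) : ℤ)) : ℚ) := by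
    refine ⟨Y * X.den ^ 3, ?_⟩
    push_cast
    have : Y * X.den ^ 3 * (Y * X.den ^ 3) = Y ^ 2 * X.den ^ 6 := by ring
    rw [this, h]
    have hn : (X.num : ℚ) = X * X.den := by
      rw [eq_comm]; exact Rat.mul_den_eq_num X
    rw [hn]
    ring
  rw [Rat.isSquare_intCast_iff] at hsq
  obtain ⟨T, hT⟩ := hsq
  refine c8_int X.num X.den T (by exact_mod_cast X.den_pos) ?_ (by rw [hT]; ring)
  exact Int.isCoprime_iff_gcd_eq_one.2 X.reduced
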